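/- arXiv:2106.11206 — 2 statements merged into one kernel-verified Lean document; each statement's English description precedes it below -/
import Mathlib

section
/- For every k ∈ {1,…,n} there exist J, J′ ∈ S_{A_n} with m_J ≠ m_{J′} such that f_k(m_J) = f_k(m_{J′}) and f_k(m_J) ≤ f_k(m_{J″}) for all J″ ∈ S_{A_n}. (This is the combinatorial content of: the vector (k, 1−k) lies in the intersection of the two cones σ_{m_J} and σ_{m_{J′}} determined by the order function of the ideal I_n, so the ray generated by (k, 1−k) appears in the fan Σ(I_n) describing the normalization of the Nash blow-up of order n of the toric surface 𝒜_n.) -/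
open Finset

/-- `Λ_{2,n}`: pairs `α ∈ ℕ²` with `1 ≤ α₁ + α₂ ≤ n`. -/
def Lam2 (n : ℕ) : Finset (ℕ × ℕ) :=
  ((range (n+1)) ×ˢ (range (n+1))).filter (fun α => 1 ≤ α.1 + α.2 ∧ α.1 + α.2 ≤ n)

/-- `v̄ ∈ ℂ^{Λ_{2,n}}`, with `α`-coordinate `C(v₁,α₁)·C(v₂,α₂)`. -/
noncomputable def vbar (n : ℕ) (v : ℕ × ℕ) : (Lam2 n) → ℂ :=
  fun α => ((v.1.choose α.1.1 * v.2.choose α.1.2 : ℕ) : ℂ)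

/-- `Λ_{3,n}`: triples `β ∈ ℕ³` with `1 ≤ β₁ + β₂ + β₃ ≤ n`. -/
def Lam3 (n : ℕ) : Finset (ℕ × ℕ × ℕ) :=
  ((range (n+1)) ×ˢ (range (n+1)) ×ˢ (range (n+1))).filter
    (fun β => 1 ≤ β.1 + β.2.1 + β.2.2 ∧ β.1 + β.2.1 + β.2.2 ≤ n)

/-- The linear map `A_n : ℕ³ → ℕ²` with matrix rows `(1,1,n)` and `(0,1,n+1)`. -/
def Amap (n : ℕ) (β : ℕ × ℕ × ℕ) : ℕ × ℕ :=
  (β.1 + β.2.1 + n * β.2.2, β.2.1 + (n+1) * β.2.2)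

/-- `c_β = Σ_{γ ≤ β} (−1)^{|β−γ|} C(β,γ) (A_nγ)‾`. -/
noncomputable def cvec (n : ℕ) (β : ℕ × ℕ × ℕ) : (Lam2 n) → ℂ :=
  ∑ γ ∈ (range (β.1+1)) ×ˢ (range (β.2.1+1)) ×ˢ (range (β.2.2+1)),
    (((-1 : ℂ) ^ ((β.1 + β.2.1 + β.2.2) - (γ.1 + γ.2.1 + γ.2.2))) *
      ((β.1.choose γ.1 * β.2.1.choose γ.2.1 * β.2.2.choose γ.2.2 : ℕ) : ℂ)) •
      vbar n (Amap n γ)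

/-- `J ∈ S_{A_n}`: `J ⊆ Λ_{3,n}`, `|J| = λ_{2,n}`, `det L^c_J ≠ 0`. -/
def memSA (n : ℕ) (J : Finset (ℕ × ℕ × ℕ)) : Prop :=
  J ⊆ Lam3 n ∧ J.card = (Lam2 n).card ∧
    ∀ e : (Lam2 n) ≃ J,
      (Matrix.of fun i j : (Lam2 n) => cvec n (e i).1 j).det ≠ 0

/-- `m_J = Σ_{β ∈ J} A_nβ`. -/
def mJ (n : ℕ) (J : Finset (ℕ × ℕ × ℕ)) : ℕ × ℕ := ∑ β ∈ J, Amap n β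

/-- `f_k(v) = k·v₁ + (1−k)·v₂`. -/
def fk (k : ℕ) (v : ℕ × ℕ) : ℤ := (k : ℤ) * v.1 + (1 - (k : ℤ)) * v.2

/-- Data of a sequence `η = (z, d₀, d₁, …, d_r)`. -/
structure OmegaData where
  r : ℕ
  z : Bool
  d : ℕ → ℕ

/-- `η ∈ Ω`: `d₀ = 0`, `d_i ≥ 1` for `1 ≤ i ≤ r` (and `d_i = 0` beyond `r`),
and `d₀ + ⋯ + d_r = n`. -/
def OmegaData.IsOmega (n : ℕ) (η : OmegaData) : Prop :=
  η.d 0 = 0 ∧ (∀ i, 1 ≤ i → i ≤ η.r → 1 ≤ η.d i) ∧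
  (∀ i, η.r < i → η.d i = 0) ∧
  (∑ i ∈ range (η.r + 1), η.d i) = n

/-- The unique `t` with `Σ_{i=0}^{t−1} d_i < j ≤ Σ_{i=0}^{t} d_i`. -/
noncomputable def tIdx (η : OmegaData) (j : ℕ) : ℕ :=
  sInf {t | j ≤ ∑ i ∈ range (t+1), η.d i}

/-- The vector `v_{j,η} ∈ ℕ²`. -/
noncomputable def vvec (η : OmegaData) (j : ℕ) : ℕ × ℕ :=
  let t := tIdx η j
  let c := j - ∑ i ∈ range t, η.d i
  let a := (∑ i ∈ range t, if (Odd i ↔ Odd t) then η.d i else 0) + c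
  if (η.z = true) ↔ Odd t then (a, 0) else (0, a)

/-- `T_{j,η}` for `1 ≤ j ≤ n`, and `T_{0,η} = {(1,1),…,(n,n)}`. -/
noncomputable def Tj (n : ℕ) (η : OmegaData) (j : ℕ) : Finset (ℕ × ℕ) :=
  if j = 0 then (range n).image (fun q => (q+1, q+1))
  else (range (n - j + 1)).image (fun p => vvec η j + (p, p))

/-- `T_η = ⋃_{j=0}^{n} T_{j,η}`. -/
noncomputable def Tset (n : ℕ) (η : OmegaData) : Finset (ℕ × ℕ) :=
  (range (n+1)).biUnion (fun j => Tj n η j)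

/-- `r_{i,η} = n·π₂(v_{i,η})`. -/
noncomputable def rshift (n : ℕ) (η : OmegaData) (i : ℕ) : ℕ := n * (vvec η i).2

/-- `T'_η = T_{0,η} ∪ ⋃_{i=1}^{n} (T_{i,η} + r_{i,η})`. -/
noncomputable def Tset' (n : ℕ) (η : OmegaData) : Finset (ℕ × ℕ) :=
  Tj n η 0 ∪ (Finset.Icc 1 n).biUnion
    (fun i => (Tj n η i).image (fun v => v + (rshift n η i, rshift n η i)))

/-- `J_η`: the (unique) subset of `Λ_{3,n}` with `A_n(J_η) = T'_η`. -/
noncomputable def Jset (n : ℕ) (η : OmegaData) : Finset (ℕ × ℕ × ℕ) :=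
  (Lam3 n).filter (fun β => Amap n β ∈ Tset' n η)

/-- `z_k = 1` iff `f_k((1,0)) ≤ f_k((n,n+1))`. -/
def zk (n k : ℕ) : Bool := decide (fk k (1, 0) ≤ fk k (n, n+1))

/-- `t_l` in the recursive definition of `η_k`, where `O`, `E` are the odd- and
even-indexed partial sums `Σ_{j<l, j odd} d_{k,j}` and `Σ_{j<l, j even} d_{k,j}`. -/
noncomputable def tval (n k : ℕ) (l O E : ℕ) : ℕ :=
  let w := (if Odd l then E else O) + 1
  if ((zk n k = true) ↔ Odd l) then
    sSup {m : ℕ | (m : ℤ) * fk k (1, 0) ≤ fk k (w * n, w * (n+1))}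
  else
    sSup {m : ℕ | (m : ℤ) * fk k (n, n+1) ≤ fk k (w, 0)}

/-- The pair `(Σ_{j≤l, j odd} d_{k,j}, Σ_{j≤l, j even} d_{k,j})` of the recursion
defining `η_k`. -/
noncomputable def oeSums (n k : ℕ) : ℕ → ℕ × ℕ
  | 0 => (0, 0)
  | l + 1 =>
    let p := oeSums n k l
    let O := p.1
    let E := p.2
    let S := O + E
    let dnext := if S < n then
        min (n - S) (tval n k (l+1) O E - (if Odd (l+1) then O else E))
      else 0
    if Odd (l+1) then (O + dnext, E) else (O, E + dnext)

/-- `d_{k,l}`. -/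
noncomputable def dk (n k : ℕ) : ℕ → ℕ
  | 0 => 0
  | l + 1 =>
    let p := oeSums n k l
    let O := p.1
    let E := p.2
    let S := O + E
    if S < n then
      min (n - S) (tval n k (l+1) O E - (if Odd (l+1) then O else E))
    else 0

/-- `η_k = (z_k, d_{k,0}, …, d_{k,r})`, where `r` is the first index with
`Σ_{j=0}^{r} d_{k,j} = n`. -/
noncomputable def etak (n k : ℕ) : OmegaData :=
  { r := sInf {r | ∑ j ∈ range (r+1), dk n k j = n},
    z := zk n k,
    d := dk n k }

/-- A lattice path with its sequence of exponents. -/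
structure IsPath (I L : ℕ → ℕ) (e : ℕ → ℕ × ℕ) : Prop where
  I0 : I 0 = 0
  L0 : L 0 = 0
  e0 : e 0 = (0, 0)
  step : ∀ j, (I (j+1) = I j + 1 ∧ L (j+1) = L j ∧ e (j+1) = (I j + 1, 0)) ∨
    (I (j+1) = I j ∧ L (j+1) = L j + 1 ∧ e (j+1) = (0, L j + 1))

theorem IsPath.sum {I L : ℕ → ℕ} {e : ℕ → ℕ × ℕ} (h : IsPath I L e) (j : ℕ) : I j + L j = j := by
  induction j with
  | zero => simp [h.I0, h.L0]
  | succ j ih => rcases h.step j with ⟨h1, h2, _⟩ | ⟨h1, h2, _⟩ <;> omega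

section alg
variable {Q : Type*} [CommRing Q] [Algebra ℂ Q]

/-- The `ℂ[b]`-span of the first powers. -/
def PS (a b c : Q) (e : ℕ → ℕ × ℕ) (j : ℕ) : Submodule ℂ Q :=
  Submodule.span ℂ {x | ∃ j' q, j' ≤ j ∧ x = b ^ q * (a ^ (e j').1 * c ^ (e j').2)}

theorem PS_mono (a b c : Q) (e : ℕ → ℕ × ℕ) {j j' : ℕ} (h : j ≤ j') :
    PS a b c e j ≤ PS a b c e j' := by
  apply Submodule.span_mono
  rintro x ⟨i, q, hi, rfl⟩
  exact ⟨i, q, hi.trans h, rfl⟩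

theorem PS_gen (a b c : Q) (e : ℕ → ℕ × ℕ) (j : ℕ) :
    a ^ (e j).1 * c ^ (e j).2 ∈ PS a b c e j :=
  Submodule.subset_span ⟨j, 0, le_rfl, by simp⟩

theorem PS_b (a b c : Q) (e : ℕ → ℕ × ℕ) (j : ℕ) {x : Q} (hx : x ∈ PS a b c e j) :
    b * x ∈ PS a b c e j := by
  induction hx using Submodule.span_induction with
  | mem x hx =>
    obtain ⟨i, q, hi, rfl⟩ := hx
    exact Submodule.subset_span ⟨i, q+1, hi, by ring⟩
  | zero => simp
  | add x y _ _ hx hy => rw [mul_add]; exact add_mem hx hy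
  | smul r x _ hx => rw [mul_smul_comm]; exact Submodule.smul_mem _ _ hx

theorem PS_adj (a b c : Q) (e : ℕ → ℕ × ℕ) (j : ℕ) {r : Q}
    (hr : r ∈ Algebra.adjoin ℂ {b}) : ∀ x ∈ PS a b c e j, r * x ∈ PS a b c e j := by
  induction hr using Algebra.adjoin_induction with
  | mem r hr =>
    intro x hx
    rw [Set.mem_singleton_iff.mp hr]
    exact PS_b a b c e j hx
  | algebraMap r =>
    intro x hx
    rw [← Algebra.smul_def]
    exact Submodule.smul_mem _ _ hx
  | add r s _ _ hr hs => intro x hx; rw [add_mul]; exact add_mem (hr x hx) (hs x hx)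
  | mul r s _ _ hr hs => intro x hx; rw [mul_assoc]; exact hr _ (hs x hx)

theorem geom_inv {Q : Type*} [CommRing Q] {n : ℕ} (a : Q) (h : a ^ (n+1) = 0) :
    (1 + a) * ∑ s ∈ range (n+1), (-a) ^ s = 1 := by
  have := mul_neg_geom_sum (-a) (n+1)
  rw [neg_pow a (n+1), h] at this
  simpa using this

theorem main_alg (n : ℕ) (a b c d : Q) (hrel : (1+a)*(1+c) = (1+b)^(n+1))
    (hd : (1 + a) * d = 1) (hb : b ^ (n+1) = 0)
    {I L : ℕ → ℕ} {e : ℕ → ℕ × ℕ} (hp : IsPath I L e) (j : ℕ)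
    (H : ∀ s ≤ j, a ^ s * d ^ (L j) ∈ PS a b c e j) :
    (∃ r l, a ^ (e (j+1)).1 * c ^ (e (j+1)).2 - r * d ^ l * a ^ (j+1) ∈ PS a b c e j) ∧
    (∀ s ≤ j+1, a ^ s * d ^ (L (j+1)) ∈ PS a b c e (j+1)) := by
  have hsum := hp.sum j
  have hgen := PS_gen a b c e (j+1)
  have hmono := PS_mono a b c e (Nat.le_succ j)
  rcases hp.step j with ⟨h1, h2, h3⟩ | ⟨h1, h2, h3⟩
  · rw [h3] at hgen ⊢
    rw [h2]
    simp only [pow_zero, mul_one] at hgen ⊢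
    have key : a ^ (I j + 1) - a ^ (j+1) * d ^ (L j) ∈ PS a b c e j := by
      have e1 : a ^ (I j + 1) = ∑ t ∈ range (L j + 1), ((L j).choose t : Q) *
          (a ^ (t + I j + 1) * d ^ (L j)) := by
        calc a ^ (I j + 1) = a ^ (I j + 1) * ((1+a) * d) ^ (L j) := by rw [hd]; simp
          _ = a ^ (I j + 1) * d ^ (L j) * (a + 1) ^ (L j) := by rw [mul_pow]; ring
          _ = _ := by
            rw [add_pow, mul_sum]
            refine sum_congr rfl fun t _ => ?_
            rw [one_pow]; ring
      rw [e1, sum_range_succ, show L j + I j + 1 = j + 1 by omega]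
      simp only [Nat.choose_self, Nat.cast_one, one_mul, add_sub_cancel_right]
      refine sum_mem fun t ht => ?_
      rw [mem_range] at ht
      rw [← nsmul_eq_mul]
      exact nsmul_mem (H _ (by omega)) _
    refine ⟨⟨1, L j, ?_⟩, ?_⟩
    · convert key using 1; ring
    · intro s hs
      rcases Nat.lt_or_ge j s with h | h
      · obtain rfl : s = j + 1 := by omega
        have := sub_mem hgen (hmono key)
        simpa using this
      · exact hmono (H s h)
  · rw [h3] at hgen ⊢
    rw [h2]
    simp only [pow_zero, one_mul] at hgen ⊢
    have hbadj : b ∈ Algebra.adjoin ℂ {b} := Algebra.subset_adjoin rfl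
    have m1 : ∀ t ≤ j + 1, (-a) ^ t * d ^ (L j + 1) - d ^ (L j + 1) ∈ PS a b c e j := by
      intro t
      induction t with
      | zero => simp
      | succ t ih =>
        intro ht
        have h5 : (-a) ^ (t+1) * d ^ (L j + 1) - d ^ (L j + 1) =
          ((-a) ^ t * d ^ (L j + 1) - d ^ (L j + 1)) - (-a)^t * d ^ (L j) * ((1 + a) * d) := by ring
        rw [h5, hd, mul_one]
        refine sub_mem (ih (by omega)) ?_
        rw [neg_pow a t, mul_assoc]
        exact PS_adj a b c e j (pow_mem (neg_mem (one_mem _)) t) _ (H t (by omega))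
    have hE : (1+b)^(n+1) ∈ Algebra.adjoin ℂ {b} :=
      pow_mem (add_mem (one_mem _) hbadj) _
    set E := (1+b)^(n+1) with hEdef
    have hc : c = d * ((E - 1) + (-a)) := by
      linear_combination (d) * hrel - (c+1) * hd + hd
    have m2 : c ^ (L j + 1) - E ^ (L j + 1) * d ^ (L j + 1) ∈ PS a b c e j := by
      have e1 : c ^ (L j + 1) - E ^ (L j + 1) * d ^ (L j + 1) =
        ∑ t ∈ range (L j + 1 + 1), ((L j + 1).choose t : Q) * ((E - 1) ^ (L j + 1 - t) *
          ((-a) ^ t * d ^ (L j + 1) - d ^ (L j + 1))) := by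
        have e2 : E ^ (L j + 1) = (1 + (E - 1)) ^ (L j + 1) := by ring
        rw [hc, e2, mul_pow, add_comm (E-1) (-a), add_pow, add_pow, mul_sum, sum_mul,
          ← sum_sub_distrib]
        refine sum_congr rfl fun t _ => ?_
        rw [one_pow]; ring
      rw [e1]
      refine sum_mem fun t ht => ?_
      rw [mem_range] at ht
      rw [← nsmul_eq_mul]
      refine nsmul_mem (PS_adj a b c e j (pow_mem (sub_mem hE (one_mem _)) _) _ (m1 t (by omega))) _
    refine ⟨⟨E ^ (L j + 1) * (-1) ^ (j+1), L j + 1, ?_⟩, ?_⟩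
    · have := sub_mem m2 (PS_adj a b c e j (pow_mem hE (L j + 1)) _ (m1 (j+1) le_rfl))
      convert this using 1
      rw [neg_pow a]; ring
    · have hG := geom_inv b hb
      set G := ∑ s ∈ range (n+1), (-b) ^ s
      have hGm : G ∈ Algebra.adjoin ℂ {b} := sum_mem fun s _ => pow_mem (neg_mem hbadj) _
      have q1 : d ^ (L j + 1) ∈ PS a b c e (j+1) := by
        have := sub_mem hgen (hmono m2)
        rw [sub_sub_cancel] at this
        have := PS_adj a b c e (j+1) (pow_mem (pow_mem hGm (n+1)) (L j + 1)) _ this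
        convert this using 1
        have hGE : G ^ (n+1) * E = 1 := by
          rw [hEdef, ← mul_pow, mul_comm G, hG, one_pow]
        rw [← mul_assoc, ← mul_pow, hGE, one_pow, one_mul]
      intro s hs
      have q2 := add_mem (hmono (m1 s hs)) q1
      rw [sub_add_cancel] at q2
      have q3 := PS_adj a b c e (j+1) (pow_mem (neg_mem (one_mem _)) s : (-1)^s ∈ Algebra.adjoin ℂ {b}) _ q2
      convert q3 using 1
      rw [← mul_assoc, ← mul_pow]; simp

theorem PS_H (n : ℕ) (a b c d : Q) (hrel : (1+a)*(1+c) = (1+b)^(n+1))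
    (hd : (1 + a) * d = 1) (hb : b ^ (n+1) = 0)
    {I L : ℕ → ℕ} {e : ℕ → ℕ × ℕ} (hp : IsPath I L e) (j : ℕ) :
    ∀ s ≤ j, a ^ s * d ^ (L j) ∈ PS a b c e j := by
  induction j with
  | zero =>
    intro s hs
    obtain rfl : s = 0 := by omega
    have := PS_gen a b c e 0
    simpa [hp.L0, hp.e0] using this
  | succ j ih => exact (main_alg n a b c d hrel hd hb hp j ih).2

theorem PS_red (n : ℕ) (a b c : Q) (hrel : (1+a)*(1+c) = (1+b)^(n+1))
    (h0 : ∀ i q, n < i + q → a ^ i * b ^ q = 0)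
    {I L : ℕ → ℕ} {e : ℕ → ℕ × ℕ} (hp : IsPath I L e) (j p : ℕ) (hj : n < j + 1 + p) :
    b ^ p * (a ^ (e (j+1)).1 * c ^ (e (j+1)).2) ∈ PS a b c e j := by
  have hb : b ^ (n+1) = 0 := by simpa using h0 0 (n+1) (by omega)
  have ha : a ^ (n+1) = 0 := by simpa using h0 (n+1) 0 (by omega)
  have hd := geom_inv a ha
  set d := ∑ s ∈ range (n+1), (-a) ^ s
  obtain ⟨r, l, h⟩ := (main_alg n a b c d hrel hd hb hp j (PS_H n a b c d hrel hd hb hp j)).1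
  have := PS_adj a b c e j (pow_mem (Algebra.subset_adjoin rfl : b ∈ Algebra.adjoin ℂ {b}) p) _ h
  convert this using 1
  linear_combination r * d ^ l * h0 (j+1) p hj

theorem PS_le (n : ℕ) (a b c : Q) (hrel : (1+a)*(1+c) = (1+b)^(n+1))
    (h0 : ∀ i q, n < i + q → a ^ i * b ^ q = 0)
    {I L : ℕ → ℕ} {e : ℕ → ℕ × ℕ} (hp : IsPath I L e) (j : ℕ) :
    PS a b c e j ≤ Submodule.span ℂ
      {x | ∃ j' q, j' ≤ j ∧ j' + q ≤ n ∧ x = b ^ q * (a ^ (e j').1 * c ^ (e j').2)} := by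
  induction j with
  | zero =>
    apply Submodule.span_le.mpr
    rintro x ⟨i, q, hi, rfl⟩
    obtain rfl : i = 0 := by omega
    by_cases hq : q ≤ n
    · exact Submodule.subset_span ⟨0, q, le_rfl, by omega, rfl⟩
    · have := h0 0 q (by omega)
      simp only [pow_zero, one_mul] at this
      rw [this, zero_mul]; exact zero_mem _
  | succ j ih =>
    have ih' := ih.trans (Submodule.span_mono (t := {x | ∃ j' q, j' ≤ j + 1 ∧ j' + q ≤ n ∧
      x = b ^ q * (a ^ (e j').1 * c ^ (e j').2)})
      (by rintro x ⟨i, q, hi, h, rfl⟩; exact ⟨i, q, by omega, h, rfl⟩))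
    apply Submodule.span_le.mpr
    rintro x ⟨i, q, hi, rfl⟩
    by_cases hij : i ≤ j
    · exact ih' (Submodule.subset_span ⟨i, q, hij, rfl⟩)
    · obtain rfl : i = j + 1 := by omega
      by_cases hq : j + 1 + q ≤ n
      · exact Submodule.subset_span ⟨j+1, q, le_rfl, hq, rfl⟩
      · exact ih' (PS_red n a b c hrel h0 hp j q (by omega))

/-- Weight filtration spanned by the chosen monomials. -/
def FW (n k m : ℕ) (a b c : Q) (e : ℕ → ℕ × ℕ) (w : ℕ) : Submodule ℂ Q :=
  Submodule.span ℂ {x | ∃ j q, j + q ≤ n ∧ k * (e j).1 + m * (e j).2 + q ≤ w ∧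
    x = b ^ q * (a ^ (e j).1 * c ^ (e j).2)}

theorem FW_mono (n k m : ℕ) (a b c : Q) (e : ℕ → ℕ × ℕ) {w w' : ℕ} (h : w ≤ w') :
    FW n k m a b c e w ≤ FW n k m a b c e w' := by
  apply Submodule.span_mono
  rintro x ⟨j, q, h1, h2, rfl⟩
  exact ⟨j, q, h1, h2.trans h, rfl⟩

theorem FW_gen (n k m : ℕ) (a b c : Q) (hrel : (1+a)*(1+c) = (1+b)^(n+1))
    (h0 : ∀ i q, n < i + q → a ^ i * b ^ q = 0)
    {I L : ℕ → ℕ} {e : ℕ → ℕ × ℕ} (hp : IsPath I L e)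
    (hw : ∀ j j' p q, j' < j → n < j + p → j' + q ≤ n →
      k * (e j').1 + m * (e j').2 + q ≤ k * (e j).1 + m * (e j).2 + p) (j p : ℕ) :
    b ^ p * (a ^ (e j).1 * c ^ (e j).2) ∈ FW n k m a b c e (k * (e j).1 + m * (e j).2 + p) := by
  by_cases hjp : j + p ≤ n
  · exact Submodule.subset_span ⟨j, p, hjp, le_rfl, rfl⟩
  · cases j with
    | zero =>
      have := h0 0 p (by omega)
      simp only [pow_zero, one_mul] at this
      rw [this, zero_mul]; exact zero_mem _
    | succ j =>
      have := PS_le n a b c hrel h0 hp j (PS_red n a b c hrel h0 hp j p (by omega))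
      refine Submodule.span_mono ?_ this
      rintro x ⟨j', q, h1, h2, rfl⟩
      exact ⟨j', q, h2, hw _ _ _ _ (by omega) (by omega) h2, rfl⟩

theorem FW_all (n k m : ℕ) (hkm : k + m = n + 1) (a b c : Q) (hrel : (1+a)*(1+c) = (1+b)^(n+1))
    (h0 : ∀ i q, n < i + q → a ^ i * b ^ q = 0)
    {I L : ℕ → ℕ} {e : ℕ → ℕ × ℕ} (hp : IsPath I L e)
    (hw : ∀ j j' p q, j' < j → n < j + p → j' + q ≤ n →
      k * (e j').1 + m * (e j').2 + q ≤ k * (e j).1 + m * (e j).2 + p)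
    (hA : ∀ i, ∃ j, e j = (i, 0)) (hC : ∀ l, ∃ j, e j = (0, l)) (i : ℕ) : ∀ l p : ℕ,
    a ^ i * b ^ p * c ^ l ∈ FW n k m a b c e (k * i + p + m * l) := by
  induction i with
  | zero =>
    intro l p
    obtain ⟨j, hj⟩ := hC l
    have := FW_gen n k m a b c hrel h0 hp hw j p
    rw [hj] at this
    convert this using 1
    · ring_nf
    · ring
  | succ i ihi =>
    intro l
    induction l with
    | zero =>
      intro p
      obtain ⟨j, hj⟩ := hA (i+1)
      have := FW_gen n k m a b c hrel h0 hp hw j p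
      rw [hj] at this
      convert this using 1
      · ring_nf
      · ring
    | succ l ihl =>
      intro p
      have hac : a * c = ∑ q ∈ range (n+1), ((n+1).choose (q+1) : Q) * b ^ (q+1) - a - c := by
        have h1 : (1+b)^(n+1) = ∑ q ∈ range (n+1), ((n+1).choose (q+1) : Q) * b ^ (q+1) + 1 := by
          rw [add_comm 1 b, add_pow, sum_range_succ']
          simp [mul_comm]
        linear_combination hrel + h1
      have e1 : a ^ (i+1) * b ^ p * c ^ (l+1) =
          ∑ q ∈ range (n+1), ((n+1).choose (q+1) : Q) * (a ^ i * b ^ (p+(q+1)) * c ^ l)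
          - a ^ (i+1) * b ^ p * c ^ l - a ^ i * b ^ p * c ^ (l+1) := by
        have : ∑ q ∈ range (n+1), ((n+1).choose (q+1) : Q) * (a ^ i * b ^ (p+(q+1)) * c ^ l) =
          (a ^ i * b ^ p * c ^ l) * ∑ q ∈ range (n+1), ((n+1).choose (q+1) : Q) * b ^ (q+1) := by
          rw [mul_sum]
          refine sum_congr rfl fun q _ => ?_
          ring
        rw [this]
        linear_combination (a ^ i * b ^ p * c ^ l) * hac
      rw [e1]
      refine sub_mem (sub_mem (sum_mem fun q hq => ?_) ?_) ?_
      · rw [mem_range] at hq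
        rw [← nsmul_eq_mul]
        refine nsmul_mem (FW_mono _ _ _ _ _ _ _ ?_ (ihi l (p+(q+1)))) _
        rw [mul_add, mul_add]; omega
      · refine FW_mono _ _ _ _ _ _ _ ?_ (ihl p)
        rw [mul_add m]; omega
      · refine FW_mono _ _ _ _ _ _ _ ?_ (ihi (l+1) p)
        rw [mul_add k]; omega

end alg

theorem IsPath.mono {I L : ℕ → ℕ} {e : ℕ → ℕ × ℕ} (h : IsPath I L e) {j j' : ℕ} (hj : j ≤ j') :
    I j ≤ I j' ∧ L j ≤ L j' := by
  induction j', hj using Nat.le_induction with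
  | base => simp
  | succ j' _ ih => rcases h.step j' with ⟨h1, h2, _⟩ | ⟨h1, h2, _⟩ <;> omega

theorem IsPath.e_le {I L : ℕ → ℕ} {e : ℕ → ℕ × ℕ} (h : IsPath I L e) (j : ℕ) :
    (e j).1 ≤ I j ∧ (e j).2 ≤ L j ∧ (1 ≤ j → 1 ≤ (e j).1 + (e j).2) := by
  cases j with
  | zero => simp [h.e0]
  | succ j => rcases h.step j with ⟨h1, h2, h3⟩ | ⟨h1, h2, h3⟩ <;> rw [h3] <;> simp <;> omega

theorem IsPath.e_lt {I L : ℕ → ℕ} {e : ℕ → ℕ × ℕ} (h : IsPath I L e) {j j' : ℕ} (hj : j < j') :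
    e j ≠ e j' := by
  obtain ⟨i, rfl⟩ : ∃ i, j' = i + 1 := ⟨j' - 1, by omega⟩
  have h1 := h.e_le j
  have h2 := h.mono (show j ≤ i by omega)
  intro he
  rcases h.step i with ⟨_, _, h3⟩ | ⟨_, _, h3⟩ <;> rw [he, h3] at h1 <;> simp at h1 <;> omega

theorem IsPath.e_inj {I L : ℕ → ℕ} {e : ℕ → ℕ × ℕ} (h : IsPath I L e) {j j' : ℕ}
    (he : e j = e j') : j = j' := by
  rcases lt_trichotomy j j' with h1 | h1 | h1
  · exact absurd he (h.e_lt h1)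
  · exact h1
  · exact absurd he.symm (h.e_lt h1)

theorem IsPath.covA {I L : ℕ → ℕ} {e : ℕ → ℕ × ℕ} (h : IsPath I L e)
    (hI : ∀ i, ∃ j, i ≤ I j) (i : ℕ) : ∃ j, e j = (i, 0) := by
  cases i with
  | zero => exact ⟨0, h.e0⟩
  | succ i =>
    classical
    have h1 := Nat.find_spec (hI (i+1))
    have h2 := fun t => Nat.find_min (hI (i+1)) (m := t)
    set j := Nat.find (hI (i+1))
    cases hj : j with
    | zero => rw [hj, h.I0] at h1; omega
    | succ t =>
      rw [hj] at h1
      have h3 := h2 t (by omega)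
      refine ⟨t+1, ?_⟩
      rcases h.step t with ⟨h4, _, h5⟩ | ⟨h4, _, h5⟩
      · rw [h5]; congr 1; omega
      · omega

theorem IsPath.covC {I L : ℕ → ℕ} {e : ℕ → ℕ × ℕ} (h : IsPath I L e)
    (hI : ∀ i, ∃ j, i ≤ L j) (i : ℕ) : ∃ j, e j = (0, i) := by
  cases i with
  | zero => exact ⟨0, h.e0⟩
  | succ i =>
    classical
    have h1 := Nat.find_spec (hI (i+1))
    have h2 := fun t => Nat.find_min (hI (i+1)) (m := t)
    set j := Nat.find (hI (i+1))
    cases hj : j with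
    | zero => rw [hj, h.L0] at h1; omega
    | succ t =>
      rw [hj] at h1
      have h3 := h2 t (by omega)
      refine ⟨t+1, ?_⟩
      rcases h.step t with ⟨_, h4, h5⟩ | ⟨_, h4, h5⟩
      · omega
      · rw [h5]; congr 1; omega

/-- Greedy path with a tie-breaking flag. -/
def gp (k m : ℕ) (fl : Bool) : ℕ → (ℕ × ℕ) × (ℕ × ℕ)
  | 0 => ((0, 0), (0, 0))
  | j + 1 =>
    let s := (gp k m fl j).1
    if k * (s.1 + 1) ≤ m * (s.2 + 1) ∧ ¬ (fl = true ∧ s.1 + 1 = m ∧ s.2 + 1 = k) then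
      ((s.1 + 1, s.2), (s.1 + 1, 0))
    else ((s.1, s.2 + 1), (0, s.2 + 1))

theorem gp_path (k m : ℕ) (fl : Bool) : IsPath (fun j => (gp k m fl j).1.1)
    (fun j => (gp k m fl j).1.2) (fun j => (gp k m fl j).2) := by
  refine ⟨rfl, rfl, rfl, fun j => ?_⟩
  simp only [gp]
  split_ifs <;> simp

/-- Weight invariant. -/
def WInv (k m I L w : ℕ) : Prop :=
  k * I ≤ w ∧ m * L ≤ w ∧ w ≤ k * (I + 1) ∧ w ≤ m * (L + 1) ∧ (w = k * I ∨ w = m * L)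

theorem gp_inv (k m : ℕ) (fl : Bool) (j : ℕ) :
    WInv k m (gp k m fl j).1.1 (gp k m fl j).1.2
      (k * (gp k m fl j).2.1 + m * (gp k m fl j).2.2) := by
  induction j with
  | zero => simp [gp, WInv]
  | succ j ih =>
    simp only [gp]
    generalize (gp k m fl j).1.1 = I at *
    generalize (gp k m fl j).1.2 = L at *
    generalize k * (gp k m fl j).2.1 + m * (gp k m fl j).2.2 = w at *
    obtain ⟨h1, h2, h3, h4, h5⟩ := ih
    split_ifs with hc
    · simp only [WInv, mul_zero, add_zero]
      refine ⟨le_rfl, by omega, by gcongr; omega, by omega, by simp⟩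
    · have hc' : m * (L + 1) ≤ k * (I + 1) := by
        by_contra hcon
        apply hc
        refine ⟨by omega, ?_⟩
        rintro ⟨_, h, h'⟩
        rw [h, h', mul_comm] at hcon
        omega
      simp only [WInv, mul_zero, zero_add]
      refine ⟨by omega, le_rfl, by omega, by gcongr; omega, by simp⟩

theorem wineq_one (m n I L w I' L' w' p q : ℕ) (hm : 1 + m = n + 1) (h : WInv 1 m I L w)
    (h' : WInv 1 m I' L' w') (hj : n < I + L + p) (hj' : I' + L' + q ≤ n) :
    w' + q ≤ w + p := by
  obtain rfl : m = n := by omega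
  obtain ⟨h1, h2, h3, h4, h5⟩ := h
  obtain ⟨h1', h2', h3', h4', h5'⟩ := h'
  have a1 : w' = I' + L' := by
    rcases L' with _ | L'
    · simp at *; omega
    · rw [mul_add] at h2'
      have : L' ≤ m * L' := by
        rcases m with _ | m
        · omega
        · rw [Nat.succ_mul]; omega
      omega
  rcases L with _ | L
  · simp at *; omega
  · rw [mul_add] at h2
    omega

theorem WInv.symm {k m I L w : ℕ} (h : WInv k m I L w) : WInv m k L I w :=
  ⟨h.2.1, h.1, h.2.2.2.1, h.2.2.1, h.2.2.2.2.symm⟩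

theorem wineq_two (k m n X Y w I' L' w' p q : ℕ) (hk : 2 ≤ k) (hm : 2 ≤ m)
    (h : WInv k m (I' + X) (L' + Y) w)
    (h' : WInv k m I' L' w') (hw : w' = k * I') (hXY : 1 ≤ X + Y) (hj : n < I' + X + (L' + Y) + p)
    (hj' : I' + L' + q ≤ n) :
    w' + q ≤ w + p := by
  obtain ⟨h1, h2, h3, h4, h5⟩ := h
  obtain ⟨h1', h2', h3', h4', h5'⟩ := h'
  rw [mul_add] at h1 h2 h3' h4'
  have a1 : 2 * X ≤ k * X := by gcongr
  rcases Y with _ | Y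
  · omega
  · have a2 : 2 * Y ≤ m * Y := by gcongr
    rw [mul_add m Y] at h2
    omega

theorem wineq (k m n I L w I' L' w' p q : ℕ) (hk : 1 ≤ k) (hm : 1 ≤ m) (hkm : k + m = n + 1)
    (h : WInv k m I L w) (h' : WInv k m I' L' w') (hI : I' ≤ I) (hL : L' ≤ L)
    (hlt : I' + L' < I + L) (hj : n < I + L + p) (hj' : I' + L' + q ≤ n) :
    w' + q ≤ w + p := by
  rcases Nat.lt_or_ge 1 k with hk2 | hk2
  · rcases Nat.lt_or_ge 1 m with hm2 | hm2
    · obtain ⟨X, rfl⟩ := Nat.exists_eq_add_of_le hI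
      obtain ⟨Y, rfl⟩ := Nat.exists_eq_add_of_le hL
      rcases h'.2.2.2.2 with hw | hw
      · exact wineq_two k m n X Y w I' L' w' p q hk2 hm2 h h' hw (by omega) hj hj'
      · exact wineq_two m k n Y X w L' I' w' p q hm2 hk2 h.symm h'.symm hw (by omega) (by omega)
          (by omega)
    · obtain rfl : m = 1 := by omega
      exact wineq_one k n L I w L' I' w' p q (by omega) h.symm h'.symm (by omega) (by omega)
  · obtain rfl : k = 1 := by omega
    exact wineq_one m n I L w I' L' w' p q hkm h h' hj hj'

theorem gp_unbA (k m : ℕ) (hk : 1 ≤ k) (hm : 1 ≤ m) (fl : Bool) (i : ℕ) :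
    ∃ j, i ≤ (gp k m fl j).1.1 := by
  refine ⟨i + k * (i + 1) + 1, ?_⟩
  have h1 := gp_inv k m fl (i + k * (i + 1) + 1)
  have h2 := (gp_path k m fl).sum (i + k * (i + 1) + 1)
  set j := i + k * (i + 1) + 1 with hj
  by_contra hcon
  obtain ⟨a1, a2, a3, a4, a5⟩ := h1
  have b1 : k * ((gp k m fl j).1.1 + 1) ≤ k * (i + 1) := by gcongr; omega
  have b2 : 1 * (gp k m fl j).1.2 ≤ m * (gp k m fl j).1.2 := by gcongr
  omega

theorem gp_unbC (k m : ℕ) (hk : 1 ≤ k) (hm : 1 ≤ m) (fl : Bool) (i : ℕ) :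
    ∃ j, i ≤ (gp k m fl j).1.2 := by
  refine ⟨i + m * (i + 1) + 1, ?_⟩
  have h1 := gp_inv k m fl (i + m * (i + 1) + 1)
  have h2 := (gp_path k m fl).sum (i + m * (i + 1) + 1)
  set j := i + m * (i + 1) + 1 with hj
  by_contra hcon
  obtain ⟨a1, a2, a3, a4, a5⟩ := h1
  have b1 : m * ((gp k m fl j).1.2 + 1) ≤ m * (i + 1) := by gcongr; omega
  have b2 : 1 * (gp k m fl j).1.1 ≤ k * (gp k m fl j).1.1 := by gcongr
  omega

theorem gp_wt (k m n : ℕ) (hk : 1 ≤ k) (hm : 1 ≤ m) (hkm : k + m = n + 1) (fl : Bool) :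
    ∀ j j' p q, j' < j → n < j + p → j' + q ≤ n →
      k * (gp k m fl j').2.1 + m * (gp k m fl j').2.2 + q ≤
      k * (gp k m fl j).2.1 + m * (gp k m fl j).2.2 + p := by
  intro j j' p q h1 h2 h3
  have s1 := (gp_path k m fl).sum j
  have s2 := (gp_path k m fl).sum j'
  have s3 := (gp_path k m fl).mono h1.le
  exact wineq k m n _ _ _ _ _ _ p q hk hm hkm (gp_inv k m fl j) (gp_inv k m fl j') s3.1 s3.2
    (by omega) (by omega) (by omega)

theorem gp_agree (k m n : ℕ) (hkm : k + m = n + 1) (j : ℕ) (hj : j < n) :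
    gp k m true j = gp k m false j := by
  induction j with
  | zero => rfl
  | succ j ih =>
    have ih := ih (by omega)
    have s := (gp_path k m false).sum j
    simp only [gp]
    rw [ih]
    have : ¬ ((gp k m false j).1.1 + 1 = m ∧ (gp k m false j).1.2 + 1 = k) := by omega
    simp [this]

theorem gp_last (k m n : ℕ) (hk : 1 ≤ k) (hm : 1 ≤ m) (hkm : k + m = n + 1) :
    (gp k m true n).2 = (0, k) ∧ (gp k m false n).2 = (m, 0) := by
  obtain ⟨j, rfl⟩ : ∃ j, n = j + 1 := ⟨n - 1, by omega⟩
  have hag := gp_agree k m (j+1) hkm j (by omega)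
  have s := (gp_path k m false).sum j
  obtain ⟨h1, h2, h3, h4, h5⟩ := gp_inv k m false j
  have hI : (gp k m false j).1.1 + 1 = m ∧ (gp k m false j).1.2 + 1 = k := by
    generalize (gp k m false j).1.1 = I at *
    generalize (gp k m false j).1.2 = L at *
    have i1 : k * I ≤ m * (L + 1) := h1.trans h4
    have i2 : m * L ≤ k * (I + 1) := h2.trans h3
    rcases lt_trichotomy (I + 1) m with h | h | h
    · exfalso
      have c1 : k ≤ L := by omega
      have c2 : I + 2 ≤ m := by omega
      nlinarith
    · omega
    · exfalso
      have c1 : m ≤ I := by omega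
      have c2 : L + 2 ≤ k := by omega
      nlinarith
  simp only [gp]
  rw [hag, hI.1, hI.2, mul_comm]
  simp

section concrete
open Polynomial

theorem bi_coeff_mul (f g : ℂ[X][X]) (r s : ℕ)
    (hf : ∀ i j, i + j < r → (f.coeff j).coeff i = 0)
    (hg : ∀ i j, i + j < s → (g.coeff j).coeff i = 0) (i j : ℕ) (h : i + j < r + s) :
    ((f * g).coeff j).coeff i = 0 := by
  rw [coeff_mul, finsetSum_coeff]
  refine sum_eq_zero fun x hx => ?_
  rw [coeff_mul]
  refine sum_eq_zero fun y hy => ?_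
  rw [HasAntidiagonal.mem_antidiagonal] at hx hy
  by_cases h1 : y.1 + x.1 < r
  · rw [hf _ _ h1, zero_mul]
  · rw [hg _ _ (by omega), mul_zero]

theorem bi_coeff_pow (f : ℂ[X][X]) (hf : (f.coeff 0).coeff 0 = 0) (r : ℕ) :
    ∀ i j, i + j < r → ((f ^ r).coeff j).coeff i = 0 := by
  induction r with
  | zero => intro i j h; omega
  | succ r ih =>
    rw [pow_succ]
    intro i j h
    refine bi_coeff_mul _ _ r 1 ih ?_ i j h
    intro i j h
    obtain ⟨rfl, rfl⟩ : i = 0 ∧ j = 0 := by omega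
    exact hf

/-- The ideal of elements of order greater than `n`. -/
def IQ (n : ℕ) : Ideal ℂ[X][X] where
  carrier := {f | ∀ i j, i + j < n + 1 → (f.coeff j).coeff i = 0}
  zero_mem' := by simp
  add_mem' := by
    intro f g hf hg i j h
    simp [hf i j h, hg i j h]
  smul_mem' := by
    intro f g hg i j h
    exact bi_coeff_mul f g 0 (n+1) (by intro i j h; omega) hg i j (by omega)

/-- Coordinates of a polynomial. -/
noncomputable def coefP (n : ℕ) : ℂ[X][X] →ₗ[ℂ] (Lam2 n → ℂ) where
  toFun f α := (f.coeff α.1.2).coeff α.1.1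
  map_add' f g := by ext; simp
  map_smul' r f := by ext; simp

theorem mem_Lam2 {n : ℕ} {α : ℕ × ℕ} : α ∈ Lam2 n ↔ 1 ≤ α.1 + α.2 ∧ α.1 + α.2 ≤ n := by
  simp only [Lam2, mem_filter, mem_product, mem_range]; omega

theorem mem_Lam3 {n : ℕ} {β : ℕ × ℕ × ℕ} : β ∈ Lam3 n ↔
    1 ≤ β.1 + β.2.1 + β.2.2 ∧ β.1 + β.2.1 + β.2.2 ≤ n := by
  simp only [Lam3, mem_filter, mem_product, mem_range]; omega

theorem coefP_IQ (n : ℕ) (f : ℂ[X][X]) (hf : f ∈ IQ n) : coefP n f = 0 := by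
  ext α
  have := mem_Lam2.mp α.2
  exact hf _ _ (by omega)

/-- Coordinates on the truncated ring. -/
noncomputable def coefQ (n : ℕ) : (ℂ[X][X] ⧸ IQ n) →ₗ[ℂ] (Lam2 n → ℂ) :=
  (Submodule.liftQ ((IQ n).restrictScalars ℂ) (coefP n) (fun f hf => coefP_IQ n f hf)).comp
    (Submodule.Quotient.restrictScalarsEquiv ℂ (IQ n)).symm.toLinearMap

theorem coefQ_mk (n : ℕ) (f : ℂ[X][X]) : coefQ n (Ideal.Quotient.mk (IQ n) f) = coefP n f := rfl

/-- `x`. -/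
noncomputable def px : ℂ[X][X] := C (1 + X)
/-- `y`. -/
noncomputable def py : ℂ[X][X] := 1 + X

theorem coefP_monomial (n : ℕ) (v : ℕ × ℕ) : coefP n (px ^ v.1 * py ^ v.2) = vbar n v := by
  ext α
  simp only [coefP, px, py, vbar, LinearMap.coe_mk, AddHom.coe_mk]
  rw [← C_pow, coeff_C_mul, coeff_one_add_X_pow, coeff_mul_natCast, coeff_one_add_X_pow]
  push_cast; rfl

/-- `a`. -/
noncomputable def pa : ℂ[X][X] := px - 1
/-- `b`. -/
noncomputable def pb : ℂ[X][X] := px * py - 1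
/-- `c`. -/
noncomputable def pc (n : ℕ) : ℂ[X][X] := px ^ n * py ^ (n+1) - 1

theorem sub_one_pow_sum {R : Type*} [CommRing R] (x : R) (r : ℕ) :
    (x - 1) ^ r = ∑ t ∈ range (r+1), (-1) ^ (r - t) * (r.choose t : R) * x ^ t := by
  rw [sub_eq_add_neg, add_pow]
  exact sum_congr rfl fun t _ => by ring

theorem cvec_eq (n : ℕ) (β : ℕ × ℕ × ℕ) :
    cvec n β = coefP n (pa ^ β.1 * pb ^ β.2.1 * pc n ^ β.2.2) := by
  rw [pa, pb, pc, sub_one_pow_sum, sub_one_pow_sum, sub_one_pow_sum, mul_assoc, sum_mul_sum,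
    ← sum_product', sum_mul_sum, ← sum_product', map_sum, cvec]
  refine sum_congr rfl fun γ hγ => ?_
  simp only [mem_product, mem_range] at hγ
  rw [← coefP_monomial, ← map_smul]
  congr 1
  have h1 : β.1 + β.2.1 + β.2.2 - (γ.1 + γ.2.1 + γ.2.2) =
    (β.1 - γ.1) + (β.2.1 - γ.2.1) + (β.2.2 - γ.2.2) := by omega
  rw [h1, Algebra.smul_def]
  simp only [Amap, map_mul, map_pow, map_neg, map_one, map_natCast]
  push_cast
  ring

theorem rel_P (n : ℕ) : (1 + pa) * (1 + pc n) = (1 + pb) ^ (n+1) := by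
  simp only [pa, pb, pc]; ring

theorem zero_P (n i q : ℕ) (h : n < i + q) : pa ^ i * pb ^ q ∈ IQ n := by
  intro i' j' h'
  refine bi_coeff_mul _ _ i q (bi_coeff_pow _ ?_ i) (bi_coeff_pow _ ?_ q) _ _ (by omega)
  · simp [pa, px]
  · simp [pb, px, py, mul_add, coeff_one]

/-- The selected exponents. -/
def phi (e : ℕ → ℕ × ℕ) (α : ℕ × ℕ) : ℕ × ℕ × ℕ := ((e α.1).1, α.2, (e α.1).2)

/-- Weight. -/
def wt (k m : ℕ) (β : ℕ × ℕ × ℕ) : ℕ := k * β.1 + β.2.1 + m * β.2.2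

theorem FW_coef (n k m : ℕ) {Q : Type} [CommRing Q] [Algebra ℂ Q] (π : ℂ[X][X] →ₐ[ℂ] Q)
    (cQ : Q →ₗ[ℂ] (Lam2 n → ℂ)) (hcQ : ∀ f, cQ (π f) = coefP n f) (e : ℕ → ℕ × ℕ) (he : e 0 = (0,0)) (w : ℕ) (x : Q)
    (hx : x ∈ FW n k m (π pa) (π pb)
      (π (pc n)) e w) :
    ∃ M : Lam2 n → ℂ, cQ x = ∑ α, M α • cvec n (phi e α) ∧
      ∀ α, M α ≠ 0 → wt k m (phi e α) ≤ w := by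
  induction hx using Submodule.span_induction with
  | mem x hx =>
    obtain ⟨j, q, h1, h2, rfl⟩ := hx
    by_cases h3 : 1 ≤ j + q
    · refine ⟨Pi.single ⟨(j, q), mem_Lam2.mpr ⟨h3, h1⟩⟩ 1, ?_, ?_⟩
      · rw [sum_eq_single ⟨(j, q), mem_Lam2.mpr ⟨h3, h1⟩⟩]
        · rw [Pi.single_eq_same, one_smul, cvec_eq, ← hcQ]
          congr 1
          simp only [phi, map_mul, map_pow]
          ring
        · intro α _ hα
          rw [Pi.single_eq_of_ne hα, zero_smul]
        · simp
      · intro α hα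
        have : α = ⟨(j, q), mem_Lam2.mpr ⟨h3, h1⟩⟩ := by
          by_contra hne
          exact hα (Pi.single_eq_of_ne hne _)
        rw [this]
        simp only [wt, phi]; omega
    · obtain ⟨rfl, rfl⟩ : j = 0 ∧ q = 0 := by omega
      refine ⟨0, ?_, by simp⟩
      rw [he]
      simp only [pow_zero, mul_one, Pi.zero_apply, zero_smul, sum_const_zero]
      rw [← map_one π, hcQ]
      ext α
      have := mem_Lam2.mp α.2
      simp only [coefP, LinearMap.coe_mk, AddHom.coe_mk, coeff_one, Pi.zero_apply]
      by_cases h : (α.1.2 = 0)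
      · have h' : α.1.1 ≠ 0 := by omega
        simp [h, coeff_one, h']
      · simp [h]
  | zero => exact ⟨0, by simp, by simp⟩
  | add x y _ _ hx hy =>
    obtain ⟨M, h1, h2⟩ := hx
    obtain ⟨N, h3, h4⟩ := hy
    refine ⟨M + N, ?_, ?_⟩
    · rw [map_add, h1, h3, ← sum_add_distrib]
      exact sum_congr rfl fun α _ => by rw [Pi.add_apply, add_smul]
    · intro α hα
      by_cases h5 : M α = 0
      · by_cases h6 : N α = 0
        · simp [h5, h6] at hα
        · exact h4 α h6
      · exact h2 α h5
  | smul r x _ hx =>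
    obtain ⟨M, h1, h2⟩ := hx
    refine ⟨r • M, ?_, ?_⟩
    · rw [map_smul, h1, smul_sum]
      exact sum_congr rfl fun α _ => by rw [Pi.smul_apply, smul_assoc]
    · intro α hα
      refine h2 α fun h => hα (by simp [h])

/-- All hypotheses on a path needed for optimality. -/
structure GoodPath (n k m : ℕ) (I L : ℕ → ℕ) (e : ℕ → ℕ × ℕ) : Prop where
  hp : IsPath I L e
  hw : ∀ j j' p q, j' < j → n < j + p → j' + q ≤ n →
      k * (e j').1 + m * (e j').2 + q ≤ k * (e j).1 + m * (e j).2 + p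
  hA : ∀ i, ∃ j, e j = (i, 0)
  hC : ∀ l, ∃ j, e j = (0, l)

theorem mono_mem {n k m : ℕ} {Q : Type} [CommRing Q] [Algebra ℂ Q] (π : ℂ[X][X] →ₐ[ℂ] Q)
    (hker : ∀ f ∈ IQ n, π f = 0) (hkm : k + m = n + 1) {I L : ℕ → ℕ} {e : ℕ → ℕ × ℕ}
    (h : GoodPath n k m I L e) (i l p : ℕ) :
    π (pa ^ i * pb ^ p * pc n ^ l) ∈
      FW n k m (π pa) (π pb)
      (π (pc n)) e (k * i + p + m * l) := by
  simp only [map_mul, map_pow]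
  refine FW_all n k m hkm _ _ _ ?_ ?_ h.hp h.hw h.hA h.hC i l p
  · have := congrArg π (rel_P n)
    simpa only [map_mul, map_add, map_one, map_pow] using this
  · intro i q hiq
    have := hker _ (zero_P n i q hiq)
    simpa only [map_mul, map_pow] using this

theorem expand_aux {n k m : ℕ} {Q : Type} [CommRing Q] [Algebra ℂ Q] (π : ℂ[X][X] →ₐ[ℂ] Q)
    (cQ : Q →ₗ[ℂ] (Lam2 n → ℂ)) (hcQ : ∀ f, cQ (π f) = coefP n f)
    (hker : ∀ f ∈ IQ n, π f = 0) (hkm : k + m = n + 1) {I L : ℕ → ℕ} {e : ℕ → ℕ × ℕ}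
    (h : GoodPath n k m I L e) (β : ℕ × ℕ × ℕ) :
    ∃ M : Lam2 n → ℂ, cvec n β = ∑ α, M α • cvec n (phi e α) ∧
      ∀ α, M α ≠ 0 → wt k m (phi e α) ≤ wt k m β := by
  rw [cvec_eq, ← hcQ]
  exact FW_coef n k m π cQ hcQ e h.hp.e0 _ _ (mono_mem π hker hkm h β.1 β.2.2 β.2.1)

theorem adj_mem {n k m : ℕ} {Q : Type} [CommRing Q] [Algebra ℂ Q] (π : ℂ[X][X] →ₐ[ℂ] Q)
    (cQ : Q →ₗ[ℂ] (Lam2 n → ℂ)) (hcQ : ∀ f, cQ (π f) = coefP n f)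
    (hker : ∀ f ∈ IQ n, π f = 0) (hkm : k + m = n + 1) {I L : ℕ → ℕ} {e : ℕ → ℕ × ℕ}
    (h : GoodPath n k m I L e) (x : Q)
    (hx : x ∈ Algebra.adjoin ℂ {π pa, π pb}) :
    ∃ M : Lam2 n → ℂ, cQ x = ∑ α, M α • cvec n (phi e α) := by
  rw [← Subalgebra.mem_toSubmodule, Algebra.adjoin_eq_span] at hx
  induction hx using Submodule.span_induction with
  | mem x hx =>
    rw [SetLike.mem_coe, Submonoid.mem_closure_pair] at hx
    obtain ⟨i, p, rfl⟩ := hx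
    obtain ⟨M, h1, _⟩ := FW_coef n k m π cQ hcQ e h.hp.e0 _ _ (mono_mem π hker hkm h i 0 p)
    refine ⟨M, ?_⟩
    rw [← h1]
    simp
  | zero => exact ⟨0, by simp⟩
  | add x y _ _ hx hy =>
    obtain ⟨M, h1⟩ := hx
    obtain ⟨N, h3⟩ := hy
    refine ⟨M + N, ?_⟩
    rw [map_add, h1, h3, ← sum_add_distrib]
    exact sum_congr rfl fun α _ => by rw [Pi.add_apply, add_smul]
  | smul r x _ hx =>
    obtain ⟨M, h1⟩ := hx
    refine ⟨r • M, ?_⟩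
    rw [map_smul, h1, smul_sum]
    exact sum_congr rfl fun α _ => by rw [Pi.smul_apply, smul_assoc]

theorem unit_mem_aux {n k m : ℕ} {Q : Type} [CommRing Q] [Algebra ℂ Q] (π : ℂ[X][X] →ₐ[ℂ] Q)
    (cQ : Q →ₗ[ℂ] (Lam2 n → ℂ)) (hcQ : ∀ f, cQ (π f) = coefP n f)
    (hker : ∀ f ∈ IQ n, π f = 0) (hkm : k + m = n + 1) {I L : ℕ → ℕ} {e : ℕ → ℕ × ℕ}
    (h : GoodPath n k m I L e) (α : Lam2 n) :
    ∃ M : Lam2 n → ℂ, Pi.single α (1:ℂ) = ∑ α, M α • cvec n (phi e α) := by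
  have h1 : cQ (π ((C X) ^ α.1.1 * X ^ α.1.2)) = Pi.single α (1:ℂ) := by
    rw [hcQ]
    ext γ
    simp only [coefP, LinearMap.coe_mk, AddHom.coe_mk]
    rw [← C_pow, coeff_C_mul, coeff_X_pow]
    by_cases h : γ = α
    · subst h; simp
    · rw [Pi.single_eq_of_ne h]
      by_cases h2 : γ.1.2 = α.1.2
      · have h3 : γ.1.1 ≠ α.1.1 := fun h3 => h (Subtype.ext (Prod.ext h3 h2))
        simp [h2, coeff_X_pow, h3]
      · simp [h2]
  rw [← h1]
  apply adj_mem π cQ hcQ hker hkm h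
  have ha : (π pa) ^ (n+1) = 0 := by
    have := hker _ (zero_P n (n+1) 0 (by omega))
    simpa only [map_mul, map_pow, pow_zero, mul_one] using this
  have hd := geom_inv _ ha
  have e1 : (1 + π pa) * π X =
      π pb - π pa := by
    rw [← map_one π, ← map_add, ← map_mul, ← map_sub]
    congr 1
    simp only [pa, pb, py]; ring
  have e2 : (C X : ℂ[X][X]) = pa := by simp [pa, px]
  have m1 : π pa ∈ Algebra.adjoin ℂ
    {π pa, π pb} := Algebra.subset_adjoin (by simp)
  have m2 : π pb ∈ Algebra.adjoin ℂ
    {π pa, π pb} := Algebra.subset_adjoin (by simp)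
  rw [map_mul, map_pow, map_pow, e2]
  set a := π pa
  set b := π pb
  set d := ∑ s ∈ range (n+1), (-a) ^ s with hdd
  have m3 : d ∈ Algebra.adjoin ℂ {a, b} := sum_mem fun s _ => pow_mem (neg_mem m1) _
  have e3 : π X = (b - a) * d := by
    linear_combination d * e1 - π X * hd
  rw [e3]
  exact mul_mem (pow_mem m1 _) (pow_mem (mul_mem (sub_mem m2 m1) m3) _)

theorem mk_ker (n : ℕ) : ∀ f ∈ IQ n, Ideal.Quotient.mkₐ ℂ (IQ n) f = 0 := by
  intro f hf
  rw [Ideal.Quotient.mkₐ_eq_mk]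
  exact Ideal.Quotient.eq_zero_iff_mem.mpr hf

theorem expand {n k m : ℕ} (hkm : k + m = n + 1) {I L : ℕ → ℕ} {e : ℕ → ℕ × ℕ}
    (h : GoodPath n k m I L e) (β : ℕ × ℕ × ℕ) :
    ∃ M : Lam2 n → ℂ, cvec n β = ∑ α, M α • cvec n (phi e α) ∧
      ∀ α, M α ≠ 0 → wt k m (phi e α) ≤ wt k m β :=
  expand_aux (Q := ℂ[X][X] ⧸ IQ n) (Ideal.Quotient.mkₐ ℂ (IQ n)) (coefQ n) (coefQ_mk n)
    (mk_ker n) hkm h β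

theorem unit_mem {n k m : ℕ} (hkm : k + m = n + 1) {I L : ℕ → ℕ} {e : ℕ → ℕ × ℕ}
    (h : GoodPath n k m I L e) (α : Lam2 n) :
    ∃ M : Lam2 n → ℂ, Pi.single α (1:ℂ) = ∑ α, M α • cvec n (phi e α) :=
  unit_mem_aux (Q := ℂ[X][X] ⧸ IQ n) (Ideal.Quotient.mkₐ ℂ (IQ n)) (coefQ n) (coefQ_mk n)
    (mk_ker n) hkm h α

theorem phi_inj {I L : ℕ → ℕ} {e : ℕ → ℕ × ℕ} (h : IsPath I L e) :
    Function.Injective (phi e) := by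
  rintro ⟨j, q⟩ ⟨j', q'⟩ hh
  simp only [phi, Prod.mk.injEq] at hh
  have := h.e_inj (Prod.ext hh.1 hh.2.2)
  rw [this, hh.2.1]

/-- The basis attached to a path. -/
def JJ (n : ℕ) (e : ℕ → ℕ × ℕ) : Finset (ℕ × ℕ × ℕ) := (Lam2 n).image (phi e)

theorem JJ_mem {n k m : ℕ} (hkm : k + m = n + 1) {I L : ℕ → ℕ} {e : ℕ → ℕ × ℕ}
    (h : GoodPath n k m I L e) : memSA n (JJ n e) := by
  refine ⟨?_, card_image_of_injective _ (phi_inj h.hp), ?_⟩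
  · intro β hβ
    obtain ⟨α, hα, rfl⟩ := mem_image.mp hβ
    have h1 := mem_Lam2.mp hα
    have h2 := h.hp.e_le α.1
    have h3 := h.hp.sum α.1
    rw [mem_Lam3]
    simp only [phi]
    omega
  · intro E
    choose M hM using unit_mem hkm h
    have hE : ∀ α : Lam2 n, ∃ i, (E i).1 = phi e α := by
      intro α
      refine ⟨E.symm ⟨phi e α, mem_image_of_mem _ α.2⟩, ?_⟩
      simp
    choose σ hσ using hE
    have hσi : Function.Injective σ := by
      intro α γ hh
      have h1 := hσ α
      rw [hh, hσ γ] at h1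
      exact Subtype.ext (phi_inj h.hp h1.symm)
    have hσb := Finite.injective_iff_bijective.mp hσi
    let s := Equiv.ofBijective σ hσb
    have key : (Matrix.of fun i α => M i (s.symm α)) *
        (Matrix.of fun i j : (Lam2 n) => cvec n (E i).1 j) = 1 := by
      ext i j
      rw [Matrix.mul_apply, Matrix.one_apply]
      have h1 := congrFun (hM i) j
      rw [Pi.single_apply, Finset.sum_apply] at h1
      simp only [eq_comm (a := i)]
      rw [h1, ← Equiv.sum_comp s]
      refine sum_congr rfl fun α _ => ?_
      simp only [Matrix.of_apply, Equiv.symm_apply_apply, Pi.smul_apply, smul_eq_mul]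
      rw [← hσ α]; rfl
    intro h0
    have := congrArg Matrix.det key
    rw [Matrix.det_mul, h0] at this
    simp at this

theorem fk_sum (n k m : ℕ) (hkm : k + m = n + 1) (J : Finset (ℕ × ℕ × ℕ)) :
    fk k (mJ n J) = ((∑ β ∈ J, wt k m β : ℕ) : ℤ) := by
  simp only [fk, mJ, Prod.fst_sum, Prod.snd_sum]
  push_cast
  rw [mul_sum, mul_sum, ← sum_add_distrib]
  refine sum_congr rfl fun β _ => ?_
  have : (m : ℤ) = n + 1 - k := by omega
  simp only [Amap, wt]
  push_cast
  rw [this]; ring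

theorem JJ_min {n k m : ℕ} (hkm : k + m = n + 1) {I L : ℕ → ℕ} {e : ℕ → ℕ × ℕ}
    (h : GoodPath n k m I L e) (J : Finset (ℕ × ℕ × ℕ)) (hJ : memSA n J) :
    fk k (mJ n (JJ n e)) ≤ fk k (mJ n J) := by
  obtain ⟨_, hcard, hdet⟩ := hJ
  let E : Lam2 n ≃ J := Finset.equivOfCardEq hcard.symm
  have hd := hdet E
  choose M hM hMw using fun i : Lam2 n => expand hkm h (E i).1
  have key : (Matrix.of fun i j : (Lam2 n) => cvec n (E i).1 j) =
      (Matrix.of M) * (Matrix.of fun i j : (Lam2 n) => cvec n (phi e i) j) := by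
    ext i j
    rw [Matrix.mul_apply]
    simp only [Matrix.of_apply]
    rw [hM i, Finset.sum_apply]
    rfl
  rw [key, Matrix.det_mul] at hd
  have hd' := left_ne_zero_of_mul hd
  rw [Matrix.det_apply] at hd'
  obtain ⟨σ, _, hσ⟩ := exists_ne_zero_of_sum_ne_zero hd'
  have hσ' : ∀ i, M (σ i) i ≠ 0 := by
    intro i hi
    apply hσ
    rw [prod_eq_zero (mem_univ i) (by simpa using hi), smul_zero]
  rw [fk_sum n k m hkm, fk_sum n k m hkm]
  rw [Nat.cast_le, JJ, sum_image (fun _ _ _ _ hh => phi_inj h.hp hh), ← sum_coe_sort (Lam2 n),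
    ← sum_coe_sort J, ← Equiv.sum_comp E, ← Equiv.sum_comp σ (fun i => wt k m (E i).1)]
  exact sum_le_sum fun i _ => hMw _ _ (hσ' i)

end concrete

theorem gp_good (n k m : ℕ) (hk : 1 ≤ k) (hm : 1 ≤ m) (hkm : k + m = n + 1) (fl : Bool) :
    GoodPath n k m (fun j => (gp k m fl j).1.1)
    (fun j => (gp k m fl j).1.2) (fun j => (gp k m fl j).2) :=
  ⟨gp_path k m fl, gp_wt k m n hk hm hkm fl, (gp_path k m fl).covA (gp_unbA k m hk hm fl),
    (gp_path k m fl).covC (gp_unbC k m hk hm fl)⟩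

theorem mJ_ne (n k m : ℕ) (hk : 1 ≤ k) (hm : 1 ≤ m) (hkm : k + m = n + 1) :
    mJ n (JJ n (fun j => (gp k m false j).2)) ≠ mJ n (JJ n (fun j => (gp k m true j).2)) := by
  intro hh
  have h2 := congrArg Prod.snd hh
  simp only [mJ, JJ, Prod.snd_sum] at h2
  rw [sum_image (fun _ _ _ _ hh => phi_inj (gp_path k m false) hh),
    sum_image (fun _ _ _ _ hh => phi_inj (gp_path k m true) hh)] at h2
  have hl := gp_last k m n hk hm hkm
  refine absurd h2 (ne_of_lt (sum_lt_sum ?_ ⟨(n, 0), mem_Lam2.mpr (by simp; omega), ?_⟩))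
  · intro α hα
    have h1 := mem_Lam2.mp hα
    rcases Nat.lt_or_ge α.1 n with h3 | h3
    · simp only [Amap, phi, gp_agree k m n hkm _ h3, le_refl]
    · obtain h4 : α.1 = n := by omega
      simp [Amap, phi, h4, hl.1, hl.2]
  · simp only [Amap, phi, hl.1, hl.2]
    simp; omega

theorem stmt0 (n : ℕ) (hn : 1 ≤ n) (k : ℕ) (hk1 : 1 ≤ k) (hkn : k ≤ n) :
    ∃ J J' : Finset (ℕ × ℕ × ℕ), memSA n J ∧ memSA n J' ∧
      mJ n J ≠ mJ n J' ∧ fk k (mJ n J) = fk k (mJ n J') ∧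
      ∀ J'' : Finset (ℕ × ℕ × ℕ), memSA n J'' → fk k (mJ n J) ≤ fk k (mJ n J'') := by
  obtain ⟨m, hkm⟩ : ∃ m, k + m = n + 1 := ⟨n + 1 - k, by omega⟩
  have hm : 1 ≤ m := by omega
  have g1 := gp_good n k m hk1 hm hkm false
  have g2 := gp_good n k m hk1 hm hkm true
  exact ⟨_, _, JJ_mem hkm g1, JJ_mem hkm g2, mJ_ne n k m hk1 hm hkm,
    le_antisymm (JJ_min hkm g1 _ (JJ_mem hkm g2)) (JJ_min hkm g2 _ (JJ_mem hkm g1)),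
    fun J'' h => JJ_min hkm g1 J'' h⟩
end

section
/- For every k ∈ {1,…,n}, the last vector of the sequence associated to η_k satisfies v_{n,η_k} = (0,k) or v_{n,η_k} = (n−k+1, 0). -/
open Finset

/-- weight of the type treated in step `l`. -/
def wA (n k l : ℕ) : ℕ := if ((zk n k = true) ↔ Odd l) then k else n + 1 - k

theorem wA_pos (n k l : ℕ) (hk1 : 1 ≤ k) (hkn : k ≤ n) : 0 < wA n k l := by
  unfold wA; split_ifs <;> omega

theorem wA_add (n k l : ℕ) (hkn : k ≤ n) : wA n k l + wA n k (l+1) = n + 1 := by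
  unfold wA
  by_cases hz : zk n k = true <;> by_cases ho : Odd l <;> simp [hz, ho, Nat.odd_add_one] <;> omega

theorem wA_two (n k l : ℕ) : wA n k (l+1+1) = wA n k l := by
  unfold wA
  simp [Nat.odd_add_one]

theorem fk_one (k w : ℕ) : fk k (w, 0) = ((w * k : ℕ) : ℤ) := by
  simp [fk]; ring

theorem fk_two (n k w : ℕ) (hkn : k ≤ n) :
    fk k (w * n, w * (n+1)) = ((w * (n + 1 - k) : ℕ) : ℤ) := by
  have h : ((n + 1 - k : ℕ) : ℤ) = n + 1 - k := by omega
  simp only [fk]; push_cast [h]; ring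

theorem sSup_div_aux (a b : ℕ) (ha : 0 < a) : sSup {m : ℕ | (m:ℤ) * (a:ℤ) ≤ (b:ℤ)} = b / a := by
  have : {m : ℕ | (m:ℤ) * (a:ℤ) ≤ (b:ℤ)} = Set.Iic (b / a) := by
    ext m
    simp only [Set.mem_setOf_eq, Set.mem_Iic, Nat.le_div_iff_mul_le ha]
    exact_mod_cast Iff.rfl
  rw [this, csSup_Iic]

theorem tval_eq (n k l O E : ℕ) (hk1 : 1 ≤ k) (hkn : k ≤ n) :
    tval n k l O E = ((if Odd l then E else O) + 1) * wA n k (l+1) / wA n k l := by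
  have h1 : fk k (1, 0) = ((k : ℕ) : ℤ) := by simpa using fk_one k 1
  have h2 : fk k (n, n+1) = ((n + 1 - k : ℕ) : ℤ) := by simpa using fk_two n k 1 hkn
  have h3 := wA_add n k l hkn
  unfold tval
  simp only []
  split_ifs with hc h h
  all_goals
    first
    | rw [h1, fk_two n k _ hkn, sSup_div_aux _ _ (by omega)]
    | rw [h2, fk_one, sSup_div_aux _ _ (by omega)]
  all_goals
    have h4 : wA n k l = if ((zk n k = true) ↔ Odd l) then k else n + 1 - k := rfl
    simp only [hc, if_true, if_false] at h4
    first
    | (have h5 : wA n k (l+1) = n + 1 - k := by omega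
       rw [h4, h5])
    | (have h5 : wA n k (l+1) = k := by omega
       rw [h4, h5])

/-- count of the type of parity of `l` after step `l'`. -/
noncomputable def cnt (n k l l' : ℕ) : ℕ := if Odd l then (oeSums n k l').1 else (oeSums n k l').2

theorem cnt_two (n k l l' : ℕ) : cnt n k (l+1+1) l' = cnt n k l l' := by
  simp [cnt, Nat.odd_add_one]

theorem cnt_add (n k l l' : ℕ) : cnt n k l l' + cnt n k (l+1) l' =
    (oeSums n k l').1 + (oeSums n k l').2 := by
  by_cases h : Odd l <;> simp [cnt, h, Nat.odd_add_one, add_comm]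

theorem oe_succ (n k l : ℕ) : oeSums n k (l+1) =
    if Odd (l+1) then ((oeSums n k l).1 + dk n k (l+1), (oeSums n k l).2)
    else ((oeSums n k l).1, (oeSums n k l).2 + dk n k (l+1)) := rfl

theorem cnt_succ_other (n k l : ℕ) : cnt n k l (l+1) = cnt n k l l := by
  by_cases h : Odd l <;> simp [cnt, oe_succ, h, Nat.odd_add_one]

theorem cnt_succ_same (n k l : ℕ) : cnt n k (l+1) (l+1) = cnt n k (l+1) l + dk n k (l+1) := by
  by_cases h : Odd l <;> simp [cnt, oe_succ, h, Nat.odd_add_one]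

theorem dk_succ (n k l : ℕ) (hk1 : 1 ≤ k) (hkn : k ≤ n) : dk n k (l+1) =
    if cnt n k l l + cnt n k (l+1) l < n then
      min (n - (cnt n k l l + cnt n k (l+1) l))
        ((cnt n k l l + 1) * wA n k l / wA n k (l+1) - cnt n k (l+1) l)
    else 0 := by
  rw [cnt_add]
  have : dk n k (l+1) = if (oeSums n k l).1 + (oeSums n k l).2 < n then
      min (n - ((oeSums n k l).1 + (oeSums n k l).2))
       (tval n k (l+1) (oeSums n k l).1 (oeSums n k l).2 -
        (if Odd (l+1) then (oeSums n k l).1 else (oeSums n k l).2))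
      else 0 := rfl
  rw [this, tval_eq n k _ _ _ hk1 hkn, wA_two]
  by_cases h : Odd l <;> simp [cnt, h, Nat.odd_add_one]

theorem cnt_sum (n k p l : ℕ) :
    (∑ i ∈ range (l+1), if (Odd i ↔ Odd p) then dk n k i else 0) = cnt n k p l := by
  induction l with
  | zero => simp [cnt, oeSums, dk]
  | succ l ih =>
    rw [sum_range_succ, ih]
    by_cases h : Odd l <;> by_cases hp : Odd p <;> simp [cnt, oe_succ, h, hp, Nat.odd_add_one]

theorem tot_sum (n k l : ℕ) :
    (∑ i ∈ range (l+1), dk n k i) = cnt n k l l + cnt n k (l+1) l := by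
  rw [← cnt_sum n k l l, ← cnt_sum n k (l+1) l, ← sum_add_distrib]
  refine sum_congr rfl fun i _ => ?_
  by_cases h : Odd i <;> by_cases hl : Odd l <;> simp [h, hl, Nat.odd_add_one]

theorem inv (n k : ℕ) (hk1 : 1 ≤ k) (hkn : k ≤ n) (l : ℕ) :
    cnt n k l l + cnt n k (l+1) l < n →
    l ≤ cnt n k l l + cnt n k (l+1) l ∧
    cnt n k l l * wA n k l ≤ (cnt n k (l+1) l + 1) * wA n k (l+1) ∧
    (cnt n k (l+1) l + 1) * wA n k (l+1) ≤ (cnt n k l l + 1) * wA n k l := by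
  induction l with
  | zero =>
    intro _
    simp only [cnt, oeSums, wA]
    have h1 : fk k (1, 0) = ((k : ℕ) : ℤ) := by simpa using fk_one k 1
    have h2 : fk k (n, n+1) = ((n + 1 - k : ℕ) : ℤ) := by simpa using fk_two n k 1 hkn
    simp [zk, h1, h2]
    split_ifs <;> omega
  | succ l ih =>
    intro h
    rw [cnt_two, wA_two, cnt_succ_same, cnt_succ_other] at *
    have hd := dk_succ n k l hk1 hkn
    have hS : cnt n k l l + cnt n k (l+1) l < n := by omega
    obtain ⟨i1, i2, i3⟩ := ih hS
    rw [if_pos hS] at hd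
    have hp := wA_pos n k (l+1) hk1 hkn
    have hq := (Nat.le_div_iff_mul_le hp).2 i3
    have e1 := Nat.div_mul_le_self ((cnt n k l l + 1) * wA n k l) (wA n k (l+1))
    have e2 : (cnt n k l l + 1) * wA n k l ≤ ((cnt n k l l + 1) * wA n k l / wA n k (l+1) + 1) * wA n k (l+1) := by
      rw [mul_comm (_ + 1) (wA n k (l+1))]; exact (Nat.lt_mul_div_succ _ hp).le
    generalize (cnt n k l l + 1) * wA n k l / wA n k (l+1) = q at *
    have : cnt n k (l+1) l + dk n k (l+1) = q := by omega
    rw [this]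
    exact ⟨by omega, e1, e2⟩

theorem final_arith (n A B u w : ℕ) (hA : 0 < A) (hB : 0 < B) (hAB : A + B = n + 1) (huw : u + w < n)
    (h1 : w * B ≤ (u+1) * A) (h2 : (n - w) * A ≤ (w+1) * B) : n - w = B := by
  obtain ⟨x, hx⟩ : ∃ x, n = w + x := ⟨n - w, by omega⟩
  have hnx : n - w = x := by omega
  rw [hnx] at h2; rw [hnx]; clear hnx
  have h3 : w * B ≤ x * A := h1.trans (Nat.mul_le_mul_right _ (by omega))
  zify at *
  have hw : (w:ℤ) = A + B - 1 - x := by omega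
  rw [hw] at h2 h3
  rcases lt_trichotomy (x:ℤ) B with h | h | h
  · nlinarith
  · exact h
  · nlinarith

theorem stmt4 (n : ℕ) (hn : 1 ≤ n) (k : ℕ) (hk1 : 1 ≤ k) (hkn : k ≤ n) :
    vvec (etak n k) n = (0, k) ∨ vvec (etak n k) n = (n - k + 1, 0) := by
  have hne : {t | n ≤ ∑ i ∈ range (t+1), (etak n k).d i}.Nonempty := by
    refine ⟨n, ?_⟩
    change n ≤ ∑ i ∈ range (n+1), dk n k i
    rw [tot_sum]
    by_contra h
    have := inv n k hk1 hkn n (by omega)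
    omega
  have hmem := Nat.sInf_mem hne
  have hmin : ∀ m < tIdx (etak n k) n, ¬ (n ≤ ∑ i ∈ range (m+1), dk n k i) :=
    fun m hm => Nat.notMem_of_lt_sInf (s := {t | n ≤ ∑ i ∈ range (t+1), (etak n k).d i}) hm
  change n ≤ ∑ i ∈ range (tIdx (etak n k) n+1), dk n k i at hmem
  unfold vvec
  simp only []
  generalize tIdx (etak n k) n = t at *
  rcases t with _ | l
  · simp [dk] at hmem; omega
  have hlt := hmin l (by omega)
  rw [tot_sum] at hmem hlt
  have hS : cnt n k l l + cnt n k (l+1) l < n := by omega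
  obtain ⟨-, i2, i3⟩ := inv n k hk1 hkn l hS
  change (if zk n k = true ↔ Odd (l+1) then
      ((∑ i ∈ range (l+1), if (Odd i ↔ Odd (l+1)) then dk n k i else 0) +
        (n - ∑ i ∈ range (l+1), dk n k i), 0)
      else (0, (∑ i ∈ range (l+1), if (Odd i ↔ Odd (l+1)) then dk n k i else 0) +
        (n - ∑ i ∈ range (l+1), dk n k i))) = (0, k) ∨
     (if zk n k = true ↔ Odd (l+1) then
      ((∑ i ∈ range (l+1), if (Odd i ↔ Odd (l+1)) then dk n k i else 0) +
        (n - ∑ i ∈ range (l+1), dk n k i), 0)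
      else (0, (∑ i ∈ range (l+1), if (Odd i ↔ Odd (l+1)) then dk n k i else 0) +
        (n - ∑ i ∈ range (l+1), dk n k i))) = (n - k + 1, 0)
  rw [cnt_sum, tot_sum]
  rw [cnt_two, cnt_succ_same, cnt_succ_other] at hmem
  have hd := dk_succ n k l hk1 hkn
  rw [if_pos hS] at hd
  have hp := wA_pos n k (l+1) hk1 hkn
  have hq := (Nat.le_div_iff_mul_le hp).2 i3
  have h2 := (Nat.le_div_iff_mul_le hp).1
    (show n - cnt n k l l ≤ (cnt n k l l + 1) * wA n k l / wA n k (l+1) by omega)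
  have hadd := wA_add n k l hkn
  have hf := final_arith n (wA n k (l+1)) (wA n k l) (cnt n k (l+1) l) (cnt n k l l) hp
    (wA_pos n k l hk1 hkn) (by omega) (by omega) i2 h2
  have e : cnt n k (l+1) l + (n - (cnt n k l l + cnt n k (l+1) l)) = wA n k l := by omega
  rw [e]
  have h4 : wA n k (l+1) = if ((zk n k = true) ↔ Odd (l+1)) then k else n + 1 - k := rfl
  split_ifs with hc
  · right
    rw [if_pos hc] at h4
    rw [Prod.mk.injEq]; exact ⟨by omega, rfl⟩
  · left
    rw [if_neg hc] at h4
    rw [Prod.mk.injEq]; exact ⟨rfl, by omega⟩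
end
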